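/- arXiv:1503.02958 — 5 statements merged into one kernel-verified Lean document; each statement's English description precedes it below -/
import Mathlib

section
/- Caputo derivative of the Mittag-Leffler function: let 0 < α < 1 and λ ∈ ℝ, and let y(x) = E_α(λ x^α). Then for every x > 0 the Caputo fractional derivative of order α of y satisfies D^α y(x) = λ · E_α(λ x^α). In particular, y(x) = E_α(−B x^α) solves the fractional relaxation equation D^α y(x) + B y(x) = 0 with y(0) = 1. -/
/-!
Termwise differentiation gives, for `ξ > 0`,
`d/dξ E_α(λ ξ^α) = ∑ n, λ^(n+1) / Γ(α(n+1)) * ξ^(α(n+1)-1)`.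
Against the kernel `(x - ξ)^(-α)` each term is a Beta integral,
`∫₀ˣ ξ^(α(n+1)-1) (x - ξ)^(-α) dξ = x^(αn) Γ(α(n+1)) Γ(1-α) / Γ(αn+1)`,
so that after division by `Γ(1-α)` the series becomes `λ ∑ n, (λ x^α)^n / Γ(αn+1)`.

Both interchanges rest on the absolute convergence of `∑ r^n / Γ(αn+1)` for every `r`
(`summable_pow_div_Gamma`), which follows from the elementary bound `M^s e^(-M) ≤ Γ(s+1)`
with `M` chosen so that `M^α > 2|r|`. Differentiation uses locally uniform bounds on the series of
derivatives (`hasDerivAt_mittagLeffler`), and integration uses the summability of the `L¹` norms of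
the terms, which are again computed by the Beta integral.
-/

open Real MeasureTheory

/-- The Caputo fractional derivative of order `α` of `y : ℝ → ℝ`. -/
noncomputable def caputo (α : ℝ) (y : ℝ → ℝ) (x : ℝ) : ℝ :=
  (1 / Real.Gamma (1 - α)) * ∫ ξ in (0:ℝ)..x, deriv y ξ * (x - ξ) ^ (-α)

/-- The one-parameter Mittag-Leffler function `E_α(x) = ∑ x^n/Γ(αn+1)`. -/
noncomputable def mittagLeffler (α x : ℝ) : ℝ :=
  ∑' n : ℕ, x ^ n / Real.Gamma (α * n + 1)

/-- A lower bound for the Gamma function, obtained by restricting Euler's integral to `(M, ∞)`. -/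
lemma rpow_mul_exp_neg_le_Gamma {M s : ℝ} (hM : 0 < M) (hs : 0 ≤ s) :
    M ^ s * Real.exp (-M) ≤ Real.Gamma (s + 1) := by
  have hInt := Real.GammaIntegral_convergent (s := s + 1) (by linarith)
  have hsub : Set.Ioi M ⊆ Set.Ioi (0 : ℝ) := Set.Ioi_subset_Ioi hM.le
  rw [Real.Gamma_eq_integral (by linarith), ← integral_exp_neg_Ioi M,
    ← MeasureTheory.integral_const_mul]
  calc ∫ t in Set.Ioi M, M ^ s * Real.exp (-t)
      ≤ ∫ t in Set.Ioi M, Real.exp (-t) * t ^ (s + 1 - 1) := by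
        refine setIntegral_mono_on ((integrableOn_exp_neg_Ioi M).const_mul _)
          (hInt.mono_set hsub) measurableSet_Ioi fun t ht => ?_
        rw [mul_comm, add_sub_cancel_right]
        exact mul_le_mul_of_nonneg_left (Real.rpow_le_rpow hM.le (le_of_lt ht) hs)
          (Real.exp_pos _).le
    _ ≤ _ := by
        refine setIntegral_mono_set hInt ?_ hsub.eventuallyLE
        filter_upwards [ae_restrict_mem measurableSet_Ioi] with t ht
        exact mul_nonneg (Real.exp_pos _).le (Real.rpow_nonneg (le_of_lt ht) _)

lemma Gamma_arg_pos {α : ℝ} (hα : 0 < α) (n : ℕ) : 0 < Real.Gamma (α * n + 1) :=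
  Real.Gamma_pos_of_pos (by positivity)

/-- The Mittag-Leffler series has infinite radius of convergence. -/
lemma summable_pow_div_Gamma {α : ℝ} (hα : 0 < α) (r : ℝ) :
    Summable fun n : ℕ => r ^ n / Real.Gamma (α * n + 1) := by
  -- With `M ^ α = 2 R` and `|r| ≤ R`, the `n`-th term is at most `e^M / 2^n`.
  set R : ℝ := |r| + 1 with hR
  have hRpos : 0 < R := by positivity
  set M : ℝ := (2 * R) ^ (1 / α) with hMdef
  have hM : 0 < M := by positivity
  have hMα : M ^ α = 2 * R := by
    rw [hMdef, ← Real.rpow_mul (by positivity), one_div_mul_cancel hα.ne', Real.rpow_one]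
  refine Summable.of_norm_bounded (g := fun n : ℕ => Real.exp M * (1 / 2) ^ n)
    (summable_geometric_two.mul_left _) fun n => ?_
  have hG := rpow_mul_exp_neg_le_Gamma hM (s := α * n) (by positivity)
  rw [Real.rpow_mul hM.le, hMα, Real.rpow_natCast] at hG
  rw [norm_div, norm_pow, Real.norm_eq_abs, Real.norm_of_nonneg (Gamma_arg_pos hα n).le,
    div_le_iff₀ (Gamma_arg_pos hα n)]
  calc |r| ^ n ≤ R ^ n := by gcongr; linarith
    _ = Real.exp M * (1 / 2) ^ n * ((2 * R) ^ n * Real.exp (-M)) := by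
        rw [Real.exp_neg, mul_pow, one_div, inv_pow]
        field_simp
    _ ≤ _ := by gcongr

/-- The Mittag-Leffler function may be differentiated termwise. -/
lemma hasDerivAt_mittagLeffler {α : ℝ} (hα : 0 < α) (z : ℝ) :
    HasDerivAt (mittagLeffler α)
      (∑' n : ℕ, ((n : ℝ) + 1) * z ^ n / Real.Gamma (α * ((n : ℝ) + 1) + 1)) z := by
  set R : ℝ := |z| + 1 with hR
  have hR1 : 1 ≤ R := by linarith [abs_nonneg z]
  -- On the ball of radius `R ≥ 1`, `n * |y| ^ (n - 1) ≤ 2 ^ n * R ^ n`.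
  have hbound : ∀ (n : ℕ) (y : ℝ), y ∈ Metric.ball (0 : ℝ) R →
      ‖(n : ℝ) * y ^ (n - 1) / Real.Gamma (α * n + 1)‖
        ≤ (2 * R) ^ n / Real.Gamma (α * n + 1) := by
    intro n y hy
    rw [mem_ball_zero_iff, Real.norm_eq_abs] at hy
    rw [norm_div, norm_mul, norm_pow, Real.norm_eq_abs y, Real.norm_natCast,
      Real.norm_of_nonneg (Gamma_arg_pos hα n).le, mul_pow]
    have h1 : (n : ℝ) ≤ 2 ^ n := by exact_mod_cast Nat.lt_two_pow_self.le
    have h2 : |y| ^ (n - 1) ≤ R ^ n :=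
      (pow_le_pow_left₀ (abs_nonneg y) hy.le _).trans (pow_le_pow_right₀ hR1 (Nat.sub_le _ _))
    have := (Gamma_arg_pos hα n).le
    gcongr
  have hz : z ∈ Metric.ball (0 : ℝ) R := by
    rw [mem_ball_zero_iff, Real.norm_eq_abs]; linarith
  have h := hasDerivAt_tsum_of_isPreconnected (𝕜 := ℝ) (t := Metric.ball (0 : ℝ) R)
    (g := fun (n : ℕ) (y : ℝ) => y ^ n / Real.Gamma (α * n + 1))
    (g' := fun (n : ℕ) (y : ℝ) => (n : ℝ) * y ^ (n - 1) / Real.Gamma (α * n + 1))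
    (summable_pow_div_Gamma hα (2 * R)) Metric.isOpen_ball
    (convex_ball (0 : ℝ) R).isPreconnected
    (fun n y _ => (hasDerivAt_pow n y).div_const _) hbound hz (summable_pow_div_Gamma hα z) hz
  have hs : Summable fun n : ℕ => (n : ℝ) * z ^ (n - 1) / Real.Gamma (α * n + 1) :=
    Summable.of_norm_bounded (summable_pow_div_Gamma hα (2 * R)) fun n => hbound n z hz
  rw [hs.tsum_eq_zero_add] at h
  simp only [Nat.cast_zero, zero_mul, zero_div, zero_add, Nat.cast_add, Nat.cast_one,
    Nat.add_sub_cancel] at h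
  exact h

/-- The real Beta integral over `[0, x]`. -/
lemma integral_rpow_mul_rpow {s t x : ℝ} (hs : 0 < s) (ht : 0 < t) (hx : 0 < x) :
    ∫ ξ in (0 : ℝ)..x, ξ ^ (s - 1) * (x - ξ) ^ (t - 1)
      = x ^ (s + t - 1) * (Real.Gamma s * Real.Gamma t / Real.Gamma (s + t)) := by
  have h := Complex.betaIntegral_scaled s t hx
  have hB := Complex.betaIntegral_eq_Gamma_mul_div (s : ℂ) t (by simpa) (by simpa)
  rw [hB] at h
  apply Complex.ofReal_injective
  rw [← intervalIntegral.integral_ofReal]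
  push_cast [Complex.ofReal_cpow hx.le, ← Complex.Gamma_ofReal]
  rw [← h]
  refine intervalIntegral.integral_congr fun ξ hξ => ?_
  rw [Set.uIcc_of_le hx.le] at hξ
  rw [Complex.ofReal_cpow hξ.1, Complex.ofReal_cpow (sub_nonneg.2 hξ.2)]
  push_cast
  rfl

lemma intervalIntegrable_rpow_mul_rpow {s t x : ℝ} (hs : 0 < s) (ht : 0 < t) (hx : 0 < x) :
    IntervalIntegrable (fun ξ : ℝ => ξ ^ (s - 1) * (x - ξ) ^ (t - 1)) volume 0 x := by
  -- A non-integrable function would have integral `0`, but the Beta integral is positive.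
  by_contra hni
  have h := integral_rpow_mul_rpow hs ht hx
  rw [intervalIntegral.integral_undef hni] at h
  have := Real.Gamma_pos_of_pos hs
  have := Real.Gamma_pos_of_pos ht
  have := Real.Gamma_pos_of_pos (add_pos hs ht)
  have : 0 < x ^ (s + t - 1) * (Real.Gamma s * Real.Gamma t / Real.Gamma (s + t)) := by positivity
  linarith

lemma deriv_mittagLeffler_rpow {α : ℝ} (hα : 0 < α) (lam : ℝ) {ξ : ℝ} (hξ : 0 < ξ) :
    deriv (fun ξ => mittagLeffler α (lam * ξ ^ α)) ξ
      = ∑' n : ℕ, lam ^ (n + 1) / Real.Gamma (α * ((n : ℝ) + 1))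
          * ξ ^ (α * ((n : ℝ) + 1) - 1) := by
  have h := (hasDerivAt_mittagLeffler hα (lam * ξ ^ α)).comp ξ
    ((Real.hasDerivAt_rpow_const (p := α) (Or.inl hξ.ne')).const_mul lam)
  refine h.deriv.trans ?_
  rw [← tsum_mul_right]
  refine tsum_congr fun n => ?_
  have hn : 0 < α * ((n : ℝ) + 1) := by positivity
  have hG := Real.Gamma_pos_of_pos hn
  rw [Real.Gamma_add_one hn.ne', mul_pow, ← Real.rpow_mul_natCast hξ.le,
    show α * ((n : ℝ) + 1) - 1 = α * n + (α - 1) by ring, Real.rpow_add hξ]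
  field_simp
  ring

/-- The Caputo derivative, before division by `Γ(1-α)`, of the `(n+1)`-st term of `E_α(c x^α)` is
`Γ(1-α) c` times its `n`-th term. -/
lemma integral_term {α : ℝ} (hα0 : 0 < α) (hα1 : α < 1) (c : ℝ) {x : ℝ} (hx : 0 < x) (n : ℕ) :
    ∫ ξ in (0 : ℝ)..x, c ^ (n + 1) / Real.Gamma (α * ((n : ℝ) + 1))
        * (ξ ^ (α * ((n : ℝ) + 1) - 1) * (x - ξ) ^ ((1 - α) - 1))
      = Real.Gamma (1 - α) * c * ((c * x ^ α) ^ n / Real.Gamma (α * n + 1)) := by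
  have hn : 0 < α * ((n : ℝ) + 1) := by positivity
  have hG := Real.Gamma_pos_of_pos hn
  rw [intervalIntegral.integral_const_mul, integral_rpow_mul_rpow hn (by linarith) hx,
    show α * ((n : ℝ) + 1) + (1 - α) - 1 = α * n by ring,
    show α * ((n : ℝ) + 1) + (1 - α) = α * n + 1 by ring, mul_pow, ← Real.rpow_mul_natCast hx.le]
  field_simp
  ring

lemma caputo_eq {α : ℝ} (hα0 : 0 < α) (hα1 : α < 1) (lam : ℝ) {x : ℝ} (hx : 0 < x) :
    caputo α (fun ξ => mittagLeffler α (lam * ξ ^ α)) x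
      = lam * mittagLeffler α (lam * x ^ α) := by
  set F : ℝ → ℕ → ℝ → ℝ := fun c n ξ => c ^ (n + 1) / Real.Gamma (α * ((n : ℝ) + 1))
    * (ξ ^ (α * ((n : ℝ) + 1) - 1) * (x - ξ) ^ ((1 - α) - 1)) with hF
  have hInt : ∀ c n, IntegrableOn (F c n) (Set.Ioc 0 x) := fun c n =>
    (intervalIntegrable_iff_integrableOn_Ioc_of_le hx.le).1
      ((intervalIntegrable_rpow_mul_rpow (by positivity) (by linarith) hx).const_mul _)
  have hval : ∀ c n, ∫ ξ in Set.Ioc 0 x, F c n ξ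
      = Real.Gamma (1 - α) * c * ((c * x ^ α) ^ n / Real.Gamma (α * n + 1)) := fun c n => by
    rw [← integral_term hα0 hα1 c hx n, intervalIntegral.integral_of_le hx.le]
  -- The absolute value of a term is the corresponding term for `|λ|`.
  have hnorm : ∀ n, ∫ ξ in Set.Ioc 0 x, ‖F lam n ξ‖ = ∫ ξ in Set.Ioc 0 x, F |lam| n ξ := by
    intro n
    refine setIntegral_congr_fun measurableSet_Ioc fun ξ hξ => ?_
    have hG : 0 < Real.Gamma (α * ((n : ℝ) + 1)) := Real.Gamma_pos_of_pos (by positivity)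
    have h1 : 0 ≤ ξ ^ (α * ((n : ℝ) + 1) - 1) := Real.rpow_nonneg hξ.1.le _
    have h2 : 0 ≤ (x - ξ) ^ ((1 - α) - 1) := Real.rpow_nonneg (sub_nonneg.2 hξ.2) _
    simp only [hF, Real.norm_eq_abs, abs_mul, abs_div, abs_pow, abs_of_pos hG, abs_of_nonneg h1,
      abs_of_nonneg h2]
  have hsum : Summable fun n => ∫ ξ in Set.Ioc 0 x, ‖F lam n ξ‖ := by
    simp_rw [hnorm, hval]
    exact (summable_pow_div_Gamma hα0 _).mul_left _
  have hswap := integral_tsum_of_summable_integral_norm (hInt lam) hsum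
  have hderiv : ∫ ξ in (0:ℝ)..x,
      deriv (fun ξ => mittagLeffler α (lam * ξ ^ α)) ξ * (x - ξ) ^ (-α)
      = ∫ ξ in Set.Ioc 0 x, ∑' n, F lam n ξ := by
    rw [intervalIntegral.integral_of_le hx.le]
    refine setIntegral_congr_fun measurableSet_Ioc fun ξ hξ => ?_
    rw [deriv_mittagLeffler_rpow hα0 lam hξ.1, ← tsum_mul_right]
    refine tsum_congr fun n => ?_
    rw [hF, show (1 - α) - 1 = -α by ring, mul_assoc]
  have hG : 0 < Real.Gamma (1 - α) := Real.Gamma_pos_of_pos (by linarith)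
  rw [caputo, hderiv, ← hswap]
  simp_rw [hval]
  rw [tsum_mul_left, ← mittagLeffler]
  field_simp

lemma mittagLeffler_zero (α : ℝ) : mittagLeffler α 0 = 1 := by
  rw [mittagLeffler, tsum_eq_single 0 fun n hn => by simp [hn]]
  simp

/-- Caputo derivative of the Mittag-Leffler function:
`D^α E_α(λ x^α) = λ E_α(λ x^α)`, and `y(x) = E_α(−B x^α)` solves the
fractional relaxation equation `D^α y + B y = 0`, `y(0) = 1`. -/
theorem caputo_mittagLeffler (α : ℝ) (hα0 : 0 < α) (hα1 : α < 1) :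
    (∀ lam : ℝ, ∀ x : ℝ, 0 < x →
      caputo α (fun ξ => mittagLeffler α (lam * ξ ^ α)) x
        = lam * mittagLeffler α (lam * x ^ α)) ∧
    (∀ B : ℝ,
      (fun ξ => mittagLeffler α (-B * ξ ^ α)) 0 = 1 ∧
      ∀ x : ℝ, 0 < x →
        caputo α (fun ξ => mittagLeffler α (-B * ξ ^ α)) x
          + B * mittagLeffler α (-B * x ^ α) = 0) := by
  refine ⟨fun lam x hx => caputo_eq hα0 hα1 lam hx, fun B => ⟨?_, fun x hx => ?_⟩⟩
  · simp [Real.zero_rpow hα0.ne', mittagLeffler_zero]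
  · rw [caputo_eq hα0 hα1 (-B) hx]
    ring
end

section
/- Laplace transform of derivatives of the Mittag-Leffler function: let α > 0, β > 0, a ∈ ℝ, k ∈ ℕ, and let s > 0 be such that s^α > |a|. Then ∫_0^∞ e^{−s x} x^{αk+β−1} E_{α,β}^{(k)}(a x^α) dx = k! · s^{α−β} / (s^α − a)^{k+1}, where E_{α,β}^{(k)} denotes the k-th derivative of the two-parameter Mittag-Leffler function E_{α,β}. -/
open Real MeasureTheory

/-- The two-parameter Mittag-Leffler function `E_{α,β}(x) = ∑ x^n/Γ(αn+β)`. -/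
noncomputable def mittagLeffler2 (α β x : ℝ) : ℝ :=
  ∑' n : ℕ, x ^ n / Real.Gamma (α * n + β)

/-!
The function `E_{α,β}` is a power series with infinite radius of convergence: the bound
`T ^ y ≤ C(T) Γ(y)`, valid for every `T, y > 0`, shows that `1 / Γ(αn+β)` decays faster than any
geometric sequence. Its `k`-th derivative may therefore be computed term by term, and
`x ^ (αk+β-1) E^{(k)}(a x ^ α)` is the sum over `n` of
`(n+k)(n+k-1)⋯(n+1) / Γ(p) * a ^ n * x ^ (p-1)` with `p = αn+αk+β`. The Laplace transform of
`x ^ (p-1)` is `Γ(p) / s ^ p`, so the Gamma factors cancel and what is left is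
`k! s ^ (-(αk+β)) ∑ choose (n+k) k (a / s ^ α) ^ n`, a negative binomial series with sum
`k! s ^ (-(αk+β)) / (1 - a / s ^ α) ^ (k+1)`. The same computation with `|a|` instead of `a` gives
the absolute convergence that justifies exchanging sum and integral (here `|a| < s ^ α` is used).
-/

/-- The coefficients of the derivative of a power series that converges everywhere again define a
power series that converges everywhere. -/
lemma summable_deriv_coeff {c : ℕ → ℝ} (hc : ∀ r : ℝ, Summable fun n => c n * r ^ n) (r : ℝ) :
    Summable fun n : ℕ => ((n + 1 : ℝ) * c (n + 1)) * r ^ n := by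
  have h := ((summable_nat_add_iff 1).2 (hc (2 * (|r| + 1)))).abs
  refine Summable.of_norm_bounded h fun n => ?_
  have h1 : ((n : ℝ) + 1) ≤ 2 ^ (n + 1) := by
    exact_mod_cast (Nat.lt_two_pow_self (n := n + 1)).le
  have h2 : |r| ^ n ≤ (|r| + 1) ^ (n + 1) :=
    calc |r| ^ n ≤ (|r| + 1) ^ n := by gcongr; linarith
      _ ≤ (|r| + 1) ^ (n + 1) :=
        pow_le_pow_right₀ (by linarith [abs_nonneg r]) (Nat.le_succ n)
  have h3 : (0 : ℝ) ≤ n + 1 := by positivity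
  have h4 : (0 : ℝ) ≤ 2 * (|r| + 1) := by positivity
  rw [Real.norm_eq_abs, abs_mul, abs_mul, abs_mul, abs_pow, abs_pow, abs_of_nonneg h3,
    abs_of_nonneg h4, mul_pow]
  calc ((n : ℝ) + 1) * |c (n + 1)| * |r| ^ n = |c (n + 1)| * ((n + 1) * |r| ^ n) := by ring
    _ ≤ |c (n + 1)| * (2 ^ (n + 1) * (|r| + 1) ^ (n + 1)) := by gcongr

lemma deriv_tsum_pow {c : ℕ → ℝ} (hc : ∀ r : ℝ, Summable fun n => c n * r ^ n) :
    deriv (fun x : ℝ => ∑' n, c n * x ^ n)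
      = fun x => ∑' n : ℕ, ((n + 1 : ℝ) * c (n + 1)) * x ^ n := by
  ext y
  set R := |y| + 1 with hR
  have hR0 : 0 ≤ R := by positivity
  have hu : Summable fun n : ℕ => |c n * (n * R ^ (n - 1))| := by
    refine ((summable_nat_add_iff 1).1 ?_ : Summable fun n : ℕ => c n * (n * R ^ (n - 1))).abs
    refine (summable_deriv_coeff hc R).congr fun n => ?_
    simp only [Nat.add_sub_cancel]
    push_cast
    ring
  have hb : ∀ (n : ℕ) (z : ℝ), z ∈ Metric.ball (0 : ℝ) R →
      ‖c n * (n * z ^ (n - 1))‖ ≤ |c n * (n * R ^ (n - 1))| := by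
    intro n z hz
    have hz' : |z| ≤ |R| := by
      rw [abs_of_nonneg hR0]
      simpa using (Metric.mem_ball.1 hz).le
    rw [Real.norm_eq_abs, abs_mul, abs_mul, abs_mul, abs_mul, abs_pow, abs_pow]
    gcongr
  have hy : y ∈ Metric.ball (0 : ℝ) R := by simp [hR]
  have h := hasDerivAt_tsum_of_isPreconnected (g := fun n z => c n * z ^ n) hu Metric.isOpen_ball
    (convex_ball (0 : ℝ) R).isPreconnected
    (fun n z _ => (hasDerivAt_pow n z).const_mul (c n)) hb hy (hc y) hy
  rw [h.deriv]
  have hs : Summable fun n : ℕ => c n * (n * y ^ (n - 1)) :=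
    Summable.of_norm_bounded hu fun n => hb n y hy
  rw [hs.tsum_eq_zero_add]
  simp only [Nat.cast_zero, zero_mul, mul_zero, zero_add, Nat.add_sub_cancel]
  refine tsum_congr fun n => ?_
  push_cast
  ring

lemma iteratedDeriv_tsum_pow (k : ℕ) {c : ℕ → ℝ}
    (hc : ∀ r : ℝ, Summable fun n => c n * r ^ n) :
    iteratedDeriv k (fun x : ℝ => ∑' n, c n * x ^ n)
      = fun x => ∑' n : ℕ, (((n + k).descFactorial k : ℝ) * c (n + k)) * x ^ n := by
  induction k generalizing c with
  | zero => simp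
  | succ k ih =>
    rw [iteratedDeriv_succ', deriv_tsum_pow hc]
    rw [ih (c := fun n => (n + 1 : ℝ) * c (n + 1)) (summable_deriv_coeff hc)]
    ext x
    refine tsum_congr fun n => ?_
    rw [← add_assoc n k 1, Nat.succ_descFactorial_succ]
    push_cast
    ring

/-- The Laplace integral `Γ(y) / T ^ y = ∫ x ^ (y-1) e ^ (-Tx)` is at least its part over `(1, 2]`,
where the integrand is at least `e ^ (-2T) / 2`. -/
lemma rpow_le_mul_Gamma {T y : ℝ} (hT : 0 < T) (hy : 0 < y) :
    T ^ y ≤ 2 * exp (2 * T) * Gamma y := by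
  have h1 := integral_rpow_mul_exp_neg_mul_Ioi hy hT
  have hint : IntegrableOn (fun t : ℝ => t ^ (y - 1) * exp (-(T * t))) (Set.Ioi 0) := by
    have := integrableOn_rpow_mul_exp_neg_mul_rpow (p := 1) (s := y - 1) (by linarith)
      zero_lt_one hT
    simpa using this
  have hsub : Set.Ioc (1 : ℝ) 2 ⊆ Set.Ioi 0 := fun x hx => lt_trans zero_lt_one hx.1
  have h2 : ∫ t in Set.Ioc (1 : ℝ) 2, t ^ (y - 1) * exp (-(T * t))
      ≤ ∫ t in Set.Ioi (0 : ℝ), t ^ (y - 1) * exp (-(T * t)) := by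
    refine setIntegral_mono_set hint ?_ hsub.eventuallyLE
    filter_upwards [ae_restrict_mem measurableSet_Ioi] with t ht
    have : (0 : ℝ) < t := ht
    simp only [Pi.zero_apply]
    positivity
  have h3 : ∫ t in Set.Ioc (1 : ℝ) 2, exp (-(2 * T)) / 2
      ≤ ∫ t in Set.Ioc (1 : ℝ) 2, t ^ (y - 1) * exp (-(T * t)) := by
    refine setIntegral_mono_on (by simp) (hint.mono_set hsub) measurableSet_Ioc ?_
    intro t ht
    have ht0 : 0 < t := hsub ht
    have e1 : (1 / 2 : ℝ) ≤ t ^ (y - 1) := by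
      calc (1 / 2 : ℝ) ≤ 1 / t := one_div_le_one_div_of_le ht0 ht.2
        _ = t ^ (-1 : ℝ) := by rw [rpow_neg_one, one_div]
        _ ≤ t ^ (y - 1) := rpow_le_rpow_of_exponent_le ht.1.le (by linarith)
    have e2 : exp (-(2 * T)) ≤ exp (-(T * t)) := exp_le_exp.2 (by nlinarith [ht.2])
    calc exp (-(2 * T)) / 2 = 1 / 2 * exp (-(2 * T)) := by ring
      _ ≤ _ := by gcongr
  have h4 : exp (-(2 * T)) / 2 ≤ (1 / T) ^ y * Gamma y := by
    rw [← h1]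
    refine le_trans ?_ (h3.trans h2)
    norm_num
  have hTy : 0 < T ^ y := rpow_pos_of_pos hT y
  rw [one_div, inv_rpow hT.le, exp_neg] at h4
  have he := exp_pos (2 * T)
  field_simp at h4
  linarith

lemma summable_mittagLeffler2 {α β : ℝ} (hα : 0 < α) (hβ : 0 < β) (r : ℝ) :
    Summable fun n : ℕ => (Gamma (α * n + β))⁻¹ * r ^ n := by
  -- `T` is chosen so that `T ^ α = |r| + 1` beats `|r|`.
  set T : ℝ := (|r| + 1) ^ (α⁻¹) with hTdef
  have hr : 0 < |r| + 1 := by positivity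
  have hT : 0 < T := rpow_pos_of_pos hr _
  have hTα : T ^ α = |r| + 1 := rpow_inv_rpow hr.le hα.ne'
  have hq : |r| / (|r| + 1) < 1 := (div_lt_one hr).2 (by linarith)
  have hg := (summable_geometric_of_lt_one (by positivity) hq).mul_left
    (2 * exp (2 * T) / T ^ β)
  refine Summable.of_norm_bounded hg fun n => ?_
  have hp : 0 < α * n + β := by positivity
  have hG := Gamma_pos_of_pos hp
  have hle := rpow_le_mul_Gamma hT hp
  have hTβ : 0 < T ^ β := rpow_pos_of_pos hT β
  rw [rpow_add hT, rpow_mul hT.le, hTα, rpow_natCast] at hle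
  rw [norm_mul, norm_inv, norm_pow, Real.norm_eq_abs, Real.norm_eq_abs, abs_of_pos hG, div_pow,
    inv_mul_eq_div, div_mul_div_comm, div_le_div_iff₀ hG (by positivity)]
  calc |r| ^ n * (T ^ β * (|r| + 1) ^ n) = |r| ^ n * ((|r| + 1) ^ n * T ^ β) := by ring
    _ ≤ |r| ^ n * (2 * exp (2 * T) * Gamma (α * n + β)) := by gcongr
    _ = _ := by ring

/-- The `k`-th derivative of the Mittag-Leffler function, as a power series. -/
lemma iteratedDeriv_mittagLeffler2 {α β : ℝ} (hα : 0 < α) (hβ : 0 < β) (k : ℕ) (x : ℝ) :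
    iteratedDeriv k (mittagLeffler2 α β) x
      = ∑' n : ℕ, (((n + k).descFactorial k : ℝ) * (Gamma (α * (n + k : ℕ) + β))⁻¹) * x ^ n := by
  have h : mittagLeffler2 α β = fun x => ∑' n : ℕ, (Gamma (α * n + β))⁻¹ * x ^ n := by
    ext x
    exact tsum_congr fun n => by rw [div_eq_inv_mul]
  rw [h, iteratedDeriv_tsum_pow k (summable_mittagLeffler2 hα hβ)]

/-- The Laplace transform of the `n`-th term of the series. -/
lemma integral_term_s6 {α β : ℝ} (hα : 0 < α) (hβ : 0 < β) (a : ℝ) (k n : ℕ) {s : ℝ} (hs : 0 < s) :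
    IntegrableOn (fun x : ℝ => exp (-s * x) * x ^ (α * k + β - 1) *
      ((((n + k).descFactorial k : ℝ) * (Gamma (α * (n + k : ℕ) + β))⁻¹) * (a * x ^ α) ^ n))
      (Set.Ioi 0) ∧
    ∫ x in Set.Ioi (0 : ℝ), exp (-s * x) * x ^ (α * k + β - 1) *
      ((((n + k).descFactorial k : ℝ) * (Gamma (α * (n + k : ℕ) + β))⁻¹) * (a * x ^ α) ^ n)
      = (k.factorial : ℝ) * s ^ (-(α * k + β)) * (((n + k).choose k : ℝ) * (a / s ^ α) ^ n) := by
  have hp : 0 < α * (n + k : ℕ) + β := by positivity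
  set p := α * (n + k : ℕ) + β with hpdef
  set d : ℝ := ((n + k).descFactorial k : ℝ) * (Gamma p)⁻¹ * a ^ n with hd
  have heq : Set.EqOn (fun x : ℝ => exp (-s * x) * x ^ (α * k + β - 1) *
      ((((n + k).descFactorial k : ℝ) * (Gamma p)⁻¹) * (a * x ^ α) ^ n))
      (fun x => d * (x ^ (p - 1) * exp (-(s * x)))) (Set.Ioi 0) := by
    intro x hx
    have hx0 : (0 : ℝ) < x := hx
    have e : x ^ (p - 1) = x ^ (α * k + β - 1) * (x ^ α) ^ n := by
      rw [← rpow_natCast, ← rpow_mul hx0.le, ← rpow_add hx0]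
      congr 1
      rw [hpdef]
      push_cast
      ring
    simp only [e, hd, mul_pow, neg_mul]
    ring
  have hint : IntegrableOn (fun t : ℝ => t ^ (p - 1) * exp (-(s * t))) (Set.Ioi 0) := by
    have := integrableOn_rpow_mul_exp_neg_mul_rpow (p := 1) (s := p - 1) (by linarith)
      zero_lt_one hs
    simpa using this
  refine ⟨(IntegrableOn.congr_fun (hint.const_mul d) heq.symm measurableSet_Ioi), ?_⟩
  rw [setIntegral_congr_fun measurableSet_Ioi heq, integral_const_mul,
    integral_rpow_mul_exp_neg_mul_Ioi hp hs]
  have hG := (Gamma_pos_of_pos hp).ne'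
  have e : (1 / s) ^ p = s ^ (-(α * k + β)) * ((s ^ α) ^ n)⁻¹ := by
    rw [one_div, inv_rpow hs.le, ← rpow_neg hs.le, ← rpow_natCast, ← rpow_mul hs.le,
      ← rpow_neg hs.le, ← rpow_add hs]
    congr 1
    rw [hpdef]
    push_cast
    ring
  rw [e, hd, Nat.descFactorial_eq_factorial_mul_choose, div_pow]
  push_cast
  field_simp

/-- Laplace transform of derivatives of the two-parameter Mittag-Leffler
function: `∫_0^∞ e^{−sx} x^{αk+β−1} E_{α,β}^{(k)}(a x^α) dx
= k! s^{α−β}/(s^α − a)^{k+1}` for `s^α > |a|`. -/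
theorem laplace_mittagLeffler_deriv (α β a : ℝ) (hα : 0 < α) (hβ : 0 < β)
    (k : ℕ) (s : ℝ) (hs : 0 < s) (hsa : |a| < s ^ α) :
    ∫ x in Set.Ioi (0:ℝ),
        Real.exp (-s * x) * x ^ (α * k + β - 1)
          * iteratedDeriv k (mittagLeffler2 α β) (a * x ^ α)
      = (k.factorial : ℝ) * s ^ (α - β) / (s ^ α - a) ^ (k + 1) := by
  have hsα : 0 < s ^ α := rpow_pos_of_pos hs α
  have hr : ‖a / s ^ α‖ < 1 := by
    rw [norm_div, Real.norm_eq_abs, Real.norm_eq_abs, abs_of_pos hsα]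
    exact (div_lt_one hsα).2 hsa
  have hr' : ‖|a| / s ^ α‖ < 1 := by
    rwa [norm_div, Real.norm_eq_abs, abs_abs, ← Real.norm_eq_abs, ← norm_div]
  have hnorm : ∀ n : ℕ, ∫ x in Set.Ioi (0 : ℝ), ‖exp (-s * x) * x ^ (α * k + β - 1) *
      ((((n + k).descFactorial k : ℝ) * (Gamma (α * (n + k : ℕ) + β))⁻¹) * (a * x ^ α) ^ n)‖
      = (k.factorial : ℝ) * s ^ (-(α * k + β)) *
        (((n + k).choose k : ℝ) * (|a| / s ^ α) ^ n) := by
    intro n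
    rw [← (integral_term_s6 hα hβ |a| k n hs).2]
    refine setIntegral_congr_fun measurableSet_Ioi fun x hx => ?_
    have hx0 : (0 : ℝ) < x := hx
    have hG := Gamma_pos_of_pos (show 0 < α * (n + k : ℕ) + β by positivity)
    simp only [norm_mul, norm_pow, norm_inv, Real.norm_eq_abs, Nat.abs_cast, abs_exp,
      abs_of_pos hG, abs_of_pos (rpow_pos_of_pos hx0 _)]
  have hsum := hasSum_integral_of_summable_integral_norm
    (fun n => (integral_term_s6 hα hβ a k n hs).1)
    (((summable_choose_mul_geometric_of_norm_lt_one k hr').mul_left _).congr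
      fun n => (hnorm n).symm)
  simp only [tsum_mul_left, ← iteratedDeriv_mittagLeffler2 hα hβ,
    fun n => (integral_term_s6 hα hβ a k n hs).2] at hsum
  rw [hsum.unique ((hasSum_choose_mul_geometric_of_norm_lt_one k hr).mul_left _)]
  have hne : s ^ α - a ≠ 0 := by linarith [le_abs_self a]
  have e1 : 1 - a / s ^ α = (s ^ α - a) / s ^ α := by field_simp
  have e2 : s ^ (α - β) = s ^ (-(α * k + β)) * (s ^ α) ^ (k + 1) := by
    rw [← rpow_natCast, ← rpow_mul hs.le, ← rpow_add hs]
    congr 1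
    push_cast
    ring
  rw [e1, e2, div_pow]
  field_simp
end

section
/- The first-step error of the L1 numerical solution of the relaxation equation y^{(1/2)} + y = 0, y(0)=1 is of exact order h^{1/2}: as h → 0⁺, E_{1/2}(−h^{1/2}) − 1/(1 + Γ(3/2) h^{1/2}) = (√π/2 − 2/√π) h^{1/2} + O(h); in particular the error |E_{1/2}(−h^{1/2}) − 1/(1 + Γ(3/2) h^{1/2})| is bounded below by c·h^{1/2} for some c > 0 and all sufficiently small h > 0. -/
/-!
With `s = h^{1/2}` and `a = Γ(3/2) = √π/2`, the first two terms of the series give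
`E_{1/2}(-s) = 1 - s/a + R(s)`, where `1/a = 2/√π`. Since `Γ` is increasing on `[2, ∞)` and
`Γ(2) = 1`, every later coefficient `1/Γ(n/2 + 1)`, `n ≥ 2`, is at most `1`, so the remainder is
dominated by a geometric series: `|R(s)| ≤ 2 s²` for `0 ≤ s ≤ 1/2`. On the other side
`1/(1 + a s) = 1 - a s + a² s²/(1 + a s)`. Subtracting, the difference is `(a - 1/a) s` up to
`3 s² = 3 h`. The leading coefficient is nonzero because `a² = π/4 < 1`, and this yields the lower
bound as soon as `3 s` is at most half of `1/a - a`.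
-/


open Real Filter Asymptotics

lemma gamma_three_halves : Real.Gamma (3/2) = Real.sqrt π / 2 := by
  have h := Real.Gamma_add_one (s := 1/2) (by norm_num)
  rw [Real.Gamma_one_half_eq] at h
  rw [show (3/2 : ℝ) = 1/2 + 1 by norm_num, h]
  ring

lemma one_le_gamma_tail (n : ℕ) : 1 ≤ Real.Gamma (1/2 * ((n + 2 : ℕ) : ℝ) + 1) := by
  have h2 : (2 : ℝ) ≤ 1/2 * ((n + 2 : ℕ) : ℝ) + 1 := by
    push_cast
    linarith [(Nat.cast_nonneg n : (0 : ℝ) ≤ n)]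
  have h := Real.Gamma_strictMonoOn_Ici.monotoneOn (Set.mem_Ici.2 le_rfl) (Set.mem_Ici.2 h2) h2
  rwa [Real.Gamma_two] at h

lemma mittagLeffler_half_expansion {s : ℝ} (hs : 0 ≤ s) (hs' : s ≤ 1/2) :
    |mittagLeffler (1/2) (-s) - (1 - 2 / Real.sqrt π * s)| ≤ 2 * s ^ 2 := by
  set f : ℕ → ℝ := fun n => (-s) ^ n / Real.Gamma (1/2 * n + 1) with hf
  have hbound : ∀ n : ℕ, ‖f (n + 2)‖ ≤ s ^ 2 * s ^ n := by
    intro n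
    have hG := one_le_gamma_tail n
    rw [hf, norm_div, norm_pow, norm_neg, Real.norm_of_nonneg hs,
      Real.norm_of_nonneg (by linarith)]
    calc s ^ (n + 2) / _ ≤ s ^ (n + 2) := div_le_self (by positivity) hG
      _ = s ^ 2 * s ^ n := by ring
  have hgeo : HasSum (fun n : ℕ => s ^ 2 * s ^ n) (s ^ 2 * (1 - s)⁻¹) :=
    (hasSum_geometric_of_lt_one hs (by linarith)).mul_left _
  have hsum : Summable f :=
    (summable_nat_add_iff 2).1 (Summable.of_norm_bounded hgeo.summable hbound)
  have htail : ‖∑' n, f (n + 2)‖ ≤ s ^ 2 * (1 - s)⁻¹ := tsum_of_norm_bounded hgeo hbound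
  have hsplit := hsum.sum_add_tsum_nat_add 2
  have h0 : f 0 = 1 := by simp [hf]
  have h1 : f 1 = -(2 / Real.sqrt π * s) := by
    have : (1/2 * ((1 : ℕ) : ℝ) + 1) = 3/2 := by norm_num
    simp only [hf]
    rw [this, gamma_three_halves]
    have : Real.sqrt π ≠ 0 := (Real.sqrt_pos.2 Real.pi_pos).ne'
    field_simp
  rw [Finset.sum_range_succ, Finset.sum_range_one, h0, h1] at hsplit
  have hE : mittagLeffler (1/2) (-s) - (1 - 2 / Real.sqrt π * s) = ∑' n, f (n + 2) := by
    have : mittagLeffler (1/2) (-s) = ∑' n, f n := rfl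
    rw [this]
    linarith
  rw [hE, ← Real.norm_eq_abs]
  have hinv : (1 - s)⁻¹ ≤ 2 := by
    rw [inv_le_comm₀ (by linarith) (by norm_num)]
    linarith
  nlinarith [sq_nonneg s]

lemma first_step_error_bound {s : ℝ} (hs : 0 ≤ s) (hs' : s ≤ 1/2) :
    |mittagLeffler (1/2) (-s) - 1 / (1 + Real.Gamma (3/2) * s)
      - (Real.sqrt π / 2 - 2 / Real.sqrt π) * s| ≤ 3 * s ^ 2 := by
  have hE := mittagLeffler_half_expansion hs hs'
  rw [gamma_three_halves]
  set a := Real.sqrt π / 2 with ha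
  have ha0 : 0 ≤ a := by positivity
  have ha2 : a ^ 2 ≤ 1 := by
    rw [ha, div_pow, Real.sq_sqrt Real.pi_pos.le]
    linarith [Real.pi_le_four]
  have has : 0 ≤ a * s := mul_nonneg ha0 hs
  have hne : 1 + a * s ≠ 0 := by linarith
  have hfrac : 1 / (1 + a * s) = 1 - a * s + (a * s) ^ 2 / (1 + a * s) := by
    field_simp
    ring
  have hr0 : 0 ≤ (a * s) ^ 2 / (1 + a * s) := by positivity
  have hr1 : (a * s) ^ 2 / (1 + a * s) ≤ s ^ 2 :=
    calc _ ≤ (a * s) ^ 2 := div_le_self (sq_nonneg _) (by linarith)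
      _ = a ^ 2 * s ^ 2 := by ring
      _ ≤ s ^ 2 := mul_le_of_le_one_left (sq_nonneg s) ha2
  rw [hfrac]
  rw [abs_le] at hE ⊢
  constructor <;> linarith [hE.1, hE.2, sq_nonneg s]

/-- The first-step error of the L1 numerical solution of
`y^{(1/2)} + y = 0`, `y(0) = 1` is of exact order `h^{1/2}`:
`E_{1/2}(−h^{1/2}) − 1/(1 + Γ(3/2) h^{1/2}) = (√π/2 − 2/√π) h^{1/2} + O(h)`,
and the error is bounded below by `c h^{1/2}` for small `h > 0`. -/
theorem L1_first_step_error_order :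
    ((fun h : ℝ => mittagLeffler (1/2) (-(h ^ ((1:ℝ)/2)))
        - 1 / (1 + Real.Gamma (3/2) * h ^ ((1:ℝ)/2))
        - (Real.sqrt π / 2 - 2 / Real.sqrt π) * h ^ ((1:ℝ)/2))
      =O[nhdsWithin 0 (Set.Ioi 0)] (fun h : ℝ => h)) ∧
    ∃ c : ℝ, 0 < c ∧ ∀ᶠ h : ℝ in nhdsWithin 0 (Set.Ioi 0),
      c * h ^ ((1:ℝ)/2)
        ≤ |mittagLeffler (1/2) (-(h ^ ((1:ℝ)/2)))
            - 1 / (1 + Real.Gamma (3/2) * h ^ ((1:ℝ)/2))| := by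
  have hsmall : ∀ ε : ℝ, 0 < ε →
      ∀ᶠ h : ℝ in nhdsWithin 0 (Set.Ioi 0), 0 < h ∧ h ^ ((1:ℝ)/2) ≤ ε := by
    intro ε hε
    filter_upwards [Ioo_mem_nhdsGT (show (0 : ℝ) < ε ^ 2 by positivity)] with h hh
    refine ⟨hh.1, ?_⟩
    rw [← Real.sqrt_eq_rpow]
    exact Real.sqrt_le_iff.2 ⟨hε.le, hh.2.le⟩
  have hsq : ∀ h : ℝ, 0 < h → (h ^ ((1:ℝ)/2)) ^ 2 = h := by
    intro h hh
    rw [← Real.sqrt_eq_rpow, Real.sq_sqrt hh.le]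
  constructor
  · refine IsBigO.of_bound 3 ?_
    filter_upwards [hsmall (1/2) (by norm_num)] with h hh
    have := first_step_error_bound (Real.rpow_nonneg hh.1.le _) hh.2
    rw [Real.norm_of_nonneg hh.1.le]
    rwa [hsq h hh.1, ← Real.norm_eq_abs] at this
  · have hd : 0 < 2 / Real.sqrt π - Real.sqrt π / 2 := by
      have hp : 0 < Real.sqrt π := Real.sqrt_pos.2 Real.pi_pos
      rw [sub_pos, div_lt_div_iff₀ (by norm_num) hp, Real.mul_self_sqrt Real.pi_pos.le]
      linarith [Real.pi_lt_four]
    set d := 2 / Real.sqrt π - Real.sqrt π / 2 with hd_def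
    refine ⟨d / 2, by positivity, ?_⟩
    filter_upwards [hsmall (1/2) (by norm_num), hsmall (d / 6) (by positivity)] with h h1 h2
    have hs0 := Real.rpow_nonneg h1.1.le ((1:ℝ)/2)
    have hb := first_step_error_bound hs0 h1.2
    rw [show Real.sqrt π / 2 - 2 / Real.sqrt π = -d by rw [hd_def]; ring] at hb
    set s := h ^ ((1:ℝ)/2)
    have hs2 : 3 * s ^ 2 ≤ d / 2 * s := by nlinarith [h2.2]
    -- The error is `-d s` up to `3 s² ≤ (d/2) s`, so it is at most `-(d/2) s`.
    refine le_trans ?_ (neg_le_abs _)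
    linarith [(abs_le.1 hb).2]
end

section
/- Smoothness of the substituted relaxation solution: let 0 < α < 1, B ∈ ℝ, and let m be a positive integer with mα ≥ 2. Then the function z(x) = E_α(−B x^α) − ∑_{n=0}^m (−B)^n x^{αn}/Γ(αn+1) is twice continuously differentiable on [0,1] (the one-sided derivatives at 0 existing and being continuous). -/
open Real

/-!
On `[0,1]` the function is the tail `∑_{n > m} (-B)^n x^{αn} / Γ(αn+1)`, all of whose exponents
are at least `2`. Mathlib's `x ^ p` satisfies `|x ^ p| ≤ |x| ^ p` also for negative `x`, and it is
`C^2` on all of `ℝ` when `p ≥ 2`; so the tail can be differentiated termwise, twice, on the open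
ball of radius `2`, which takes care of the endpoints as well
(`contDiffOn_two_tsum_rpow`). The required convergence, `summable_relaxation_coeff`, follows from
the bound `Γ(s+1) ≥ T^s e^{-T}` for every `T > 0`: the Gamma function outgrows every geometric
sequence.
-/

theorem rpow_mul_exp_neg_le_Gamma_s11 {s T : ℝ} (hs : 0 ≤ s) (hT : 0 < T) :
    T ^ s * exp (-T) ≤ Gamma (s + 1) := by
  have hint := GammaIntegral_convergent (s := s + 1) (by linarith)
  rw [Gamma_eq_integral (by linarith : 0 < s + 1), ← integral_exp_neg_Ioi T,
    ← MeasureTheory.integral_const_mul]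
  have hsub : Set.Ioi T ⊆ Set.Ioi 0 := Set.Ioi_subset_Ioi hT.le
  calc ∫ x in Set.Ioi T, T ^ s * exp (-x)
      ≤ ∫ x in Set.Ioi T, exp (-x) * x ^ (s + 1 - 1) := by
        refine MeasureTheory.setIntegral_mono_on ((integrableOn_exp_neg_Ioi T).const_mul _)
          (hint.mono_set hsub) measurableSet_Ioi fun x hx => ?_
        rw [mul_comm, add_sub_cancel_right]
        have : T ≤ x := le_of_lt hx
        gcongr
    _ ≤ ∫ x in Set.Ioi 0, exp (-x) * x ^ (s + 1 - 1) := by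
        refine MeasureTheory.setIntegral_mono_set hint ?_ hsub.eventuallyLE
        refine (MeasureTheory.ae_restrict_iff' measurableSet_Ioi).2 (.of_forall fun x hx => ?_)
        have : (0 : ℝ) < x := hx
        simp only [Pi.zero_apply]
        positivity

/-- The factor `(αn)^2 * 2^{αn}` dominates the terms of the series on the ball of radius `2`,
together with their first two derivatives. -/
theorem summable_relaxation_coeff {α : ℝ} (B : ℝ) (hα : 0 < α) :
    Summable fun n : ℕ =>
      |(-B) ^ n / Gamma (α * n + 1)| * (α * n) ^ 2 * (2 : ℝ) ^ (α * n) := by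
  -- The choice of `T` makes `T ^ (α * n) = 2 ^ (α * n) * c ^ n`, so that the terms are at most
  -- a multiple of `n ^ 2 * (|B| / c) ^ n`.
  set c : ℝ := |B| + 1 with hc
  have hc0 : 0 < c := by positivity
  set T : ℝ := 2 * c ^ α⁻¹ with hT
  have hT0 : 0 < T := by positivity
  have hr : ‖|B| / c‖ < 1 := by
    rw [norm_of_nonneg (by positivity), div_lt_one hc0]
    linarith
  have hsum := (summable_pow_mul_geometric_of_norm_lt_one 2 hr).mul_left (exp T * α ^ 2)
  refine Summable.of_nonneg_of_le (fun n => by positivity) (fun n => ?_) hsum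
  have hG := rpow_mul_exp_neg_le_Gamma_s11 (s := α * n) (by positivity) hT0
  have hTn : T ^ (α * n) = (2 : ℝ) ^ (α * n) * c ^ n := by
    rw [hT, mul_rpow (by positivity) (by positivity), ← rpow_mul hc0.le,
      inv_mul_cancel_left₀ hα.ne', rpow_natCast]
  rw [hTn, exp_neg] at hG
  have hG0 : 0 < Gamma (α * n + 1) := Gamma_pos_of_pos (by positivity)
  rw [abs_div, abs_pow, abs_neg, abs_of_pos hG0]
  calc |B| ^ n / Gamma (α * n + 1) * (α * n) ^ 2 * (2 : ℝ) ^ (α * n)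
      ≤ |B| ^ n / ((2 : ℝ) ^ (α * n) * c ^ n * (exp T)⁻¹) * (α * n) ^ 2
          * (2 : ℝ) ^ (α * n) := by
        gcongr
    _ = exp T * α ^ 2 * ((n : ℝ) ^ 2 * (|B| / c) ^ n) := by
        have h2 : (2 : ℝ) ^ (α * n) ≠ 0 := by positivity
        rw [div_pow]
        field_simp

theorem abs_rpow_le_two_rpow {x p q : ℝ} (hx : x ∈ Metric.ball (0 : ℝ) 2) (hq : 0 ≤ q)
    (hqp : q ≤ p) : |x ^ q| ≤ (2 : ℝ) ^ p := by
  have hx' : |x| ≤ 2 := by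
    rw [mem_ball_zero_iff, norm_eq_abs] at hx
    exact hx.le
  calc |x ^ q| ≤ |x| ^ q := abs_rpow_le_abs_rpow x q
    _ ≤ (2 : ℝ) ^ q := rpow_le_rpow (abs_nonneg x) hx' hq
    _ ≤ (2 : ℝ) ^ p := rpow_le_rpow_of_exponent_le one_le_two hqp

theorem hasDerivAt_tsum_rpow {a p : ℕ → ℝ} (hp : ∀ n, 1 ≤ p n)
    (hs : Summable fun n => |a n| * p n * (2 : ℝ) ^ p n) {x : ℝ}
    (hx : x ∈ Metric.ball (0 : ℝ) 2) :
    HasDerivAt (fun y => ∑' n, a n * y ^ p n) (∑' n, a n * p n * x ^ (p n - 1)) x := by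
  refine hasDerivAt_tsum_of_isPreconnected (g := fun n y => a n * y ^ p n)
    (g' := fun n y => a n * p n * y ^ (p n - 1)) hs Metric.isOpen_ball
    (convex_ball (0 : ℝ) 2).isPreconnected (fun n y _ => ?_) (fun n y hy => ?_)
    (Metric.mem_ball_self two_pos) ?_ hx
  · rw [mul_assoc]
    exact (hasDerivAt_rpow_const (Or.inr (hp n))).const_mul (a n)
  · have hp0 : 0 ≤ p n := zero_le_one.trans (hp n)
    rw [norm_mul, norm_mul, norm_of_nonneg hp0, norm_eq_abs, norm_eq_abs]
    gcongr
    exact abs_rpow_le_two_rpow hy (by linarith [hp n]) (by linarith)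
  · refine summable_zero.congr fun n => ?_
    rw [zero_rpow (by linarith [hp n]), mul_zero]

theorem contDiffOn_two_tsum_rpow {a p : ℕ → ℝ} (hp : ∀ n, 2 ≤ p n)
    (hs : Summable fun n => |a n| * p n ^ 2 * (2 : ℝ) ^ p n) :
    ContDiffOn ℝ 2 (fun y => ∑' n, a n * y ^ p n) (Metric.ball 0 2) := by
  have hs1 : Summable fun n => |a n| * p n * (2 : ℝ) ^ p n := by
    refine hs.of_nonneg_of_le (fun n => ?_) fun n => ?_
    · have := hp n
      positivity
    · have : p n ≤ p n ^ 2 := by nlinarith [hp n]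
      gcongr
  have hs2 : Summable fun n => |a n * p n| * (p n - 1) * (2 : ℝ) ^ (p n - 1) := by
    refine hs.of_nonneg_of_le (fun n => ?_) fun n => ?_
    · have : 0 ≤ p n - 1 := by linarith [hp n]
      positivity
    · have h0 : 0 ≤ p n := by linarith [hp n]
      have h1 : 0 ≤ p n - 1 := by linarith [hp n]
      rw [abs_mul, abs_of_nonneg h0, pow_two, ← mul_assoc]
      gcongr <;> linarith
  have hd1 : ∀ x ∈ Metric.ball (0 : ℝ) 2, HasDerivAt (fun y => ∑' n, a n * y ^ p n)
      (∑' n, a n * p n * x ^ (p n - 1)) x := fun x hx =>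
    hasDerivAt_tsum_rpow (fun n => by linarith [hp n]) hs1 hx
  have hd2 : ∀ x ∈ Metric.ball (0 : ℝ) 2, HasDerivAt (fun y => ∑' n, a n * p n * y ^ (p n - 1))
      (∑' n, a n * p n * (p n - 1) * x ^ (p n - 1 - 1)) x := fun x hx =>
    hasDerivAt_tsum_rpow (a := fun n => a n * p n) (fun n => by linarith [hp n]) hs2 hx
  have hcont : ContinuousOn (fun x : ℝ => ∑' n, a n * p n * (p n - 1) * x ^ (p n - 1 - 1))
      (Metric.ball 0 2) := by
    refine continuousOn_tsum (fun n => ?_) hs2 fun n x hx => ?_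
    · exact (continuous_const.mul
        (continuous_id.rpow_const fun x => Or.inr (by linarith [hp n]))).continuousOn
    · have h1 : 0 ≤ p n - 1 := by linarith [hp n]
      rw [norm_mul, norm_mul, norm_of_nonneg h1, norm_eq_abs, norm_eq_abs]
      gcongr
      exact abs_rpow_le_two_rpow hx (by linarith [hp n]) (by linarith)
  rw [show (2 : WithTop ℕ∞) = 1 + 1 by norm_num,
    contDiffOn_succ_iff_deriv_of_isOpen Metric.isOpen_ball]
  refine ⟨fun x hx => (hd1 x hx).differentiableAt.differentiableWithinAt, by simp, ?_⟩
  refine ContDiffOn.congr ?_ fun x hx => (hd1 x hx).deriv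
  rw [show (1 : WithTop ℕ∞) = 0 + 1 by norm_num,
    contDiffOn_succ_iff_deriv_of_isOpen Metric.isOpen_ball]
  refine ⟨fun x hx => (hd2 x hx).differentiableAt.differentiableWithinAt, by simp, ?_⟩
  exact (contDiffOn_zero.2 hcont).congr fun x hx => (hd2 x hx).deriv

/-- Smoothness of the substituted relaxation solution: when `mα ≥ 2`, the
function `z(x) = E_α(−B x^α) − ∑_{n=0}^m (−B)^n x^{αn}/Γ(αn+1)` is twice
continuously differentiable on `[0,1]`. -/
theorem substituted_relaxation_solution_C2 (α B : ℝ)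
    (hα0 : 0 < α) (hα1 : α < 1) (m : ℕ) (hm : 1 ≤ m) (hmα : 2 ≤ m * α) :
    ContDiffOn ℝ 2
      (fun x : ℝ => mittagLeffler α (-B * x ^ α)
        - ∑ n ∈ Finset.range (m + 1),
            (-B) ^ n * x ^ (α * n) / Real.Gamma (α * n + 1))
      (Set.Icc 0 1) := by
  have hexp : ∀ n : ℕ, 2 ≤ α * (n + (m + 1) : ℕ) := fun n => by
    push_cast
    nlinarith [mul_nonneg hα0.le (Nat.cast_nonneg (α := ℝ) n)]
  have hs := (summable_nat_add_iff (m + 1)).2 (summable_relaxation_coeff B hα0)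
  have hsub : Set.Icc (0 : ℝ) 1 ⊆ Metric.ball 0 2 := fun x hx => by
    rw [mem_ball_zero_iff, norm_of_nonneg hx.1]
    linarith [hx.2]
  refine ((contDiffOn_two_tsum_rpow
    (a := fun n : ℕ => (-B) ^ (n + (m + 1)) / Gamma (α * (n + (m + 1) : ℕ) + 1))
    hexp hs).mono hsub).congr fun x hx => ?_
  have hterm : ∀ n : ℕ, (-B * x ^ α) ^ n / Gamma (α * n + 1)
      = (-B) ^ n * x ^ (α * n) / Gamma (α * n + 1) := fun n => by
    rw [mul_pow, rpow_mul_natCast hx.1]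
  have hsum : Summable fun n : ℕ => (-B) ^ n * x ^ (α * n) / Gamma (α * n + 1) := by
    refine (summable_nat_add_iff (m + 1)).1 (hs.of_norm_bounded fun n => ?_)
    rw [mul_div_right_comm, norm_mul, norm_eq_abs, norm_eq_abs]
    have h1 : (1 : ℝ) ≤ (α * (n + (m + 1) : ℕ)) ^ 2 := by nlinarith [hexp n]
    have h2 := abs_rpow_le_two_rpow (hsub hx) (by linarith [hexp n])
      (le_refl (α * (n + (m + 1) : ℕ)))
    gcongr
    exact le_mul_of_one_le_right (abs_nonneg _) h1
  simp only [mittagLeffler, hterm]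
  rw [← hsum.sum_add_tsum_nat_add (m + 1), add_sub_cancel_left]
  exact tsum_congr fun n => mul_div_right_comm _ _ _
end

section
/- Smoothness in time of the substituted subdiffusion solution: let 0 < α < 1 and let m be a positive integer with mα ≥ 2. Then for each fixed x ∈ [0,π], the function t ↦ v(x,t) = sin(x) · (E_α(−t^α) − ∑_{n=0}^m (−1)^n t^{nα}/Γ(nα+1)) is twice continuously differentiable on [0,1] (the one-sided derivatives at t = 0 existing and being continuous). -/
/-!
On `[0,1]` the bracket is the tail `∑_{n ≥ m+1} (-1)^n t^(nα)/Γ(nα+1)` of the Mittag-Leffler series,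
that is `(-1)^(m+1)` times the series `fracSeries α γ t = ∑ (-1)^n t^(γ+nα)/Γ(γ+nα+1)` with
`γ = (m+1)α > 2`. Because `(t^p/Γ(p+1))' = t^(p-1)/Γ(p)`, termwise differentiation just lowers `γ`
by one, so that two derivatives keep all exponents nonnegative and the last series is continuous.

All the convergence needed, uniformly on `(-2,2)`, comes from `Γ(p+1) ≥ 4^p e^(-4)` for `p ≥ 0`
(`rpow_mul_exp_neg_le_Gamma`), which bounds the terms by the geometric sequence `e^4 2^(-(γ+nα))`.
Working on the open interval `(-2,2)`, which contains `[0,1]`, avoids one-sided derivatives: for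
exponents `p ≥ 1` Mathlib's `t ^ p` is differentiable at `0` and at negative `t` as well.
-/

open Real

/-- The series `∑ (-1)^n t^(γ+nα)/Γ(γ+nα+1)`; for `t > 0` it is `t^γ E_{α,γ+1}(-t^α)`, where
`E_{α,γ+1}` is the two-parameter Mittag-Leffler function. -/
noncomputable def fracSeries (α γ t : ℝ) : ℝ :=
  ∑' n : ℕ, (-1 : ℝ) ^ n * (t ^ (γ + n * α) / Real.Gamma (γ + n * α + 1))

/-- The tail over `x > R` of the integral defining `Γ(p+1)` is already at least `R^p e^(-R)`. -/
lemma rpow_mul_exp_neg_le_Gamma_s15 {p R : ℝ} (hp : 0 ≤ p) (hR : 0 < R) :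
    R ^ p * Real.exp (-R) ≤ Real.Gamma (p + 1) := by
  have hint := Real.GammaIntegral_convergent (s := p + 1) (by linarith)
  have hsub : Set.Ioi R ⊆ Set.Ioi 0 := Set.Ioi_subset_Ioi hR.le
  rw [Real.Gamma_eq_integral (by linarith), ← integral_exp_neg_Ioi R,
    ← MeasureTheory.integral_const_mul]
  calc ∫ x in Set.Ioi R, R ^ p * Real.exp (-x)
      ≤ ∫ x in Set.Ioi R, Real.exp (-x) * x ^ (p + 1 - 1) := by
        refine MeasureTheory.setIntegral_mono_on ?_ (hint.mono_set hsub) measurableSet_Ioi ?_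
        · exact (integrableOn_exp_neg_Ioi R).const_mul _
        · intro x hx
          rw [add_sub_cancel_right, mul_comm]
          gcongr
          exact (Set.mem_Ioi.1 hx).le
    _ ≤ _ := by
        refine MeasureTheory.setIntegral_mono_set hint ?_ hsub.eventuallyLE
        filter_upwards [MeasureTheory.ae_restrict_mem measurableSet_Ioi] with x hx
        have : 0 < x := hx
        simp only [Pi.zero_apply]
        positivity

lemma norm_fracSeries_term_le {p t : ℝ} (hp : 0 ≤ p) (ht : |t| ≤ 2) (n : ℕ) :
    ‖(-1 : ℝ) ^ n * (t ^ p / Real.Gamma (p + 1))‖ ≤ Real.exp 4 * (1 / 2) ^ p := by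
  have hG : 0 < Real.Gamma (p + 1) := Real.Gamma_pos_of_pos (by linarith)
  have h := rpow_mul_exp_neg_le_Gamma_s15 hp (show (0 : ℝ) < 4 by norm_num)
  have h1 : |t ^ p| ≤ 2 ^ p :=
    (Real.abs_rpow_le_abs_rpow t p).trans (Real.rpow_le_rpow (abs_nonneg t) ht hp)
  have h2 : (2 : ℝ) ^ p = (1 / 2) ^ p * 4 ^ p := by
    rw [← Real.mul_rpow (by norm_num) (by norm_num)]; norm_num
  have h3 : Real.exp 4 * Real.exp (-4) = 1 := by rw [← Real.exp_add]; simp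
  rw [norm_mul, norm_pow, norm_neg, norm_one, one_pow, one_mul, norm_div, Real.norm_eq_abs,
    Real.norm_of_nonneg hG.le, div_le_iff₀ hG]
  calc |t ^ p| ≤ Real.exp 4 * (1 / 2) ^ p * (4 ^ p * Real.exp (-4)) := by
        rw [h2] at h1
        linear_combination h1 - (1 / 2 : ℝ) ^ p * 4 ^ p * h3
    _ ≤ _ := by gcongr

lemma summable_fracSeries_bound {α : ℝ} (hα : 0 < α) (γ : ℝ) :
    Summable fun n : ℕ => Real.exp 4 * (1 / 2 : ℝ) ^ (γ + n * α) := by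
  have h : ∀ n : ℕ, (1 / 2 : ℝ) ^ (γ + n * α) = (1 / 2) ^ γ * ((1 / 2 : ℝ) ^ α) ^ n := fun n => by
    rw [Real.rpow_add (by norm_num), mul_comm (n : ℝ), Real.rpow_mul_natCast (by norm_num)]
  simp only [h]
  refine ((summable_geometric_of_lt_one (by positivity) ?_).mul_left _).mul_left _
  exact Real.rpow_lt_one (by norm_num) (by norm_num) hα

lemma summable_fracSeries {α γ t : ℝ} (hα : 0 < α) (hγ : 0 ≤ γ) (ht : |t| ≤ 2) :
    Summable fun n : ℕ => (-1 : ℝ) ^ n * (t ^ (γ + n * α) / Real.Gamma (γ + n * α + 1)) :=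
  Summable.of_norm_bounded (summable_fracSeries_bound hα γ)
    fun n => norm_fracSeries_term_le (by positivity) ht n

lemma continuousOn_fracSeries {α γ : ℝ} (hα : 0 < α) (hγ : 0 ≤ γ) :
    ContinuousOn (fracSeries α γ) (Set.Ioo (-2) 2) := by
  refine continuousOn_tsum (fun n => ?_) (summable_fracSeries_bound hα γ)
    fun n t ht => norm_fracSeries_term_le (by positivity) (abs_lt.2 ht).le n
  have : 0 ≤ γ + n * α := by positivity
  exact (((Real.continuous_rpow_const this).div_const _).const_mul _).continuousOn

lemma hasDerivAt_fracSeries {α γ t : ℝ} (hα : 0 < α) (hγ : 1 ≤ γ) (ht : t ∈ Set.Ioo (-2 : ℝ) 2) :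
    HasDerivAt (fracSeries α γ) (fracSeries α (γ - 1) t) t := by
  refine hasDerivAt_tsum_of_isPreconnected (summable_fracSeries_bound hα (γ - 1)) isOpen_Ioo
    isPreconnected_Ioo (fun n s _ => ?_)
    (fun n s hs => norm_fracSeries_term_le (p := γ - 1 + n * α) ?_ (abs_lt.2 hs).le n) ht
    (summable_fracSeries hα (by linarith) (abs_lt.2 ht).le) ht
  · have hp : 1 ≤ γ + n * α := by
      have : 0 ≤ n * α := by positivity
      linarith
    have hG : Real.Gamma (γ + n * α) ≠ 0 := (Real.Gamma_pos_of_pos (by linarith)).ne'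
    have h := ((Real.hasDerivAt_rpow_const (x := s) (Or.inr hp)).div_const
      (Real.Gamma (γ + n * α + 1))).const_mul ((-1 : ℝ) ^ n)
    refine h.congr_deriv ?_
    rw [Real.Gamma_add_one (by linarith), show γ - 1 + n * α = γ + n * α - 1 by ring,
      sub_add_cancel]
    have : γ + n * α ≠ 0 := by linarith
    field_simp
  · have : 0 ≤ n * α := by positivity
    linarith

lemma contDiffOn_fracSeries {α : ℝ} (hα : 0 < α) (k : ℕ) :
    ∀ γ : ℝ, k ≤ γ → ContDiffOn ℝ k (fracSeries α γ) (Set.Ioo (-2) 2) := by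
  induction k with
  | zero =>
    intro γ hγ
    exact contDiffOn_zero.2 (continuousOn_fracSeries hα (by simpa using hγ))
  | succ k ih =>
    intro γ hγ
    push_cast at hγ ⊢
    have hd : ∀ t ∈ Set.Ioo (-2 : ℝ) 2,
        HasDerivAt (fracSeries α γ) (fracSeries α (γ - 1) t) t := fun t ht =>
      hasDerivAt_fracSeries hα (by have : (0 : ℝ) ≤ k := k.cast_nonneg
                                   linarith) ht
    rw [contDiffOn_succ_iff_deriv_of_isOpen isOpen_Ioo]
    refine ⟨fun t ht => (hd t ht).differentiableAt.differentiableWithinAt, by simp, ?_⟩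
    exact (ih (γ - 1) (by linarith)).congr fun t ht => (hd t ht).deriv

/-- On `[0,1]` the Mittag-Leffler function minus its first `m + 1` terms is, up to sign, the series
`fracSeries` started at the exponent `(m + 1)α`. -/
lemma mittagLeffler_sub_sum {α t : ℝ} (hα : 0 < α) (m : ℕ) (ht : t ∈ Set.Icc (0 : ℝ) 1) :
    mittagLeffler α (-t ^ α) - ∑ n ∈ Finset.range (m + 1),
        (-1 : ℝ) ^ n * t ^ (n * α) / Real.Gamma (n * α + 1)
      = (-1) ^ (m + 1) * fracSeries α ((m + 1) * α) t := by
  have habs : |t| ≤ 2 := abs_le.2 ⟨by linarith [ht.1], by linarith [ht.2]⟩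
  have hs := summable_fracSeries hα le_rfl habs
  simp only [zero_add] at hs
  have hML : mittagLeffler α (-t ^ α)
      = ∑' n : ℕ, (-1 : ℝ) ^ n * (t ^ (n * α) / Real.Gamma (n * α + 1)) := by
    refine tsum_congr fun n => ?_
    rw [neg_pow, ← Real.rpow_mul_natCast ht.1, mul_comm α, mul_div_assoc]
  simp only [mul_div_assoc]
  rw [hML, ← hs.sum_add_tsum_nat_add (m + 1), add_sub_cancel_left, fracSeries, ← tsum_mul_left]
  refine tsum_congr fun n => ?_
  have he : ((n + (m + 1) : ℕ) : ℝ) * α = (m + 1) * α + n * α := by push_cast; ring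
  rw [he, pow_add]
  ring

/-- Smoothness in time of the substituted subdiffusion solution: when `mα ≥ 2`,
for each fixed `x ∈ [0,π]` the function
`t ↦ sin(x)(E_α(−t^α) − ∑_{n=0}^m (−1)^n t^{nα}/Γ(nα+1))` is twice
continuously differentiable on `[0,1]`. -/
theorem substituted_subdiffusion_solution_C2_in_time (α : ℝ)
    (hα0 : 0 < α) (hα1 : α < 1) (m : ℕ) (hm : 1 ≤ m) (hmα : 2 ≤ m * α) :
    ∀ x ∈ Set.Icc (0:ℝ) π,
      ContDiffOn ℝ 2
        (fun t : ℝ => Real.sin x * (mittagLeffler α (-t ^ α)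
          - ∑ n ∈ Finset.range (m + 1),
              (-1 : ℝ) ^ n * t ^ (n * α) / Real.Gamma (n * α + 1)))
        (Set.Icc 0 1) := by
  intro x _
  have hγ : ((2 : ℕ) : ℝ) ≤ (m + 1) * α := by push_cast; linarith
  have hsub : Set.Icc (0 : ℝ) 1 ⊆ Set.Ioo (-2) 2 := Set.Icc_subset_Ioo (by norm_num) (by norm_num)
  have h := (contDiffOn_fracSeries hα0 2 _ hγ).mono hsub
  refine ContDiffOn.congr (f := fun t => Real.sin x * ((-1) ^ (m + 1) * fracSeries α ((m + 1) * α) t))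
    (contDiffOn_const.mul (contDiffOn_const.mul h)) fun t ht => ?_
  rw [mittagLeffler_sub_sum hα0 m ht]
end
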